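/- Let n ≥ 2 and let 𝒜 = {[A₁],…,[A_r]} be a malnormal subgroup system of F_n, with L, Γ_i, 𝒞 and F_n − 𝒜 as in the context. Then the projectivized space ℙCurr(F_n,𝒜) = (Curr(F_n,𝒜) − {0})/ℝ₊* is compact; concretely: for every sequence (η_m)_{m ∈ ℕ} of nonzero relative currents on (F_n,𝒜) there exist a subsequence (η_{m_j})_{j ∈ ℕ}, positive real numbers λ_j, and a nonzero relative current η such that for every w ∈ F_n − 𝒜 the sequence (λ_j·η_{m_j}(C(γ_w)))_{j ∈ ℕ} converges to η(C(γ_w)). -/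

import Mathlib

/-!
Suppose that a compact open set `V` has translates covering a space. A compact set is covered by
some number `N` of translates of `V`, so every invariant measure `μ` gives it mass at most
`N * μ V`. Hence invariant measures normalized by `μ V = 1` are uniformly bounded on compact sets,
and the Riesz–Markov–Kakutani theorem yields vague limits along an ultrafilter. These are invariant,
and since vague convergence preserves the mass of compact open sets, they still satisfy `μ V = 1`.

In `∂²(F_n,𝒜)` the union of the cylinders `C(γ_x)` with `x ∈ 𝒞` is such a set. Indeed, if the
geodesic from `η` to `ξ` contains no translate of a path `γ_x` with `x ∈ 𝒞`, then each of its
segments of length `L + 2` lies in the tree of some subgroup of the system. Consecutive segments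
overlap in length `L + 1`, so by the diameter bound the subgroup is the same for all of them, and
`{ξ, η}` lies in its double boundary.
-/

open scoped Classical
open MeasureTheory

noncomputable section

namespace RelCurr

/-- The alphabet `𝔄 = ℬ ∪ ℬ⁻¹`: a letter is a generator together with a sign. -/
abbrev Letter (n : ℕ) := Fin n × Bool

/-- The inverse of a letter. -/
def linv {n : ℕ} (x : Letter n) : Letter n := (x.1, !x.2)

/-- The free group of rank `n` on the basis `Fin n`. -/
abbrev F (n : ℕ) := FreeGroup (Fin n)

/-- The reduced word of an element of `F n`. -/
def rword {n : ℕ} (g : F n) : List (Letter n) := FreeGroup.toWord g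

/-- The length `|g|` of the reduced word of `g`. -/
def wlen {n : ℕ} (g : F n) : ℕ := (rword g).length

/-- The single-letter element of `F n` given by a letter. -/
def letterE {n : ℕ} (b : Letter n) : F n := FreeGroup.mk [b]

/-- The conjugate subgroup `g A g⁻¹`. -/
def conjSub {n : ℕ} (g : F n) (A : Subgroup (F n)) : Subgroup (F n) :=
  Subgroup.map (MulAut.conj g).toMonoidHom A

/-- A subgroup `A` is malnormal if `xAx⁻¹ ∩ A = {1}` for every `x ∉ A`. -/
def Malnormal {n : ℕ} (A : Subgroup (F n)) : Prop :=
  ∀ x : F n, x ∉ A → conjSub x A ⊓ A = ⊥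

/-- The word metric on the Cayley tree `T`. -/
def dist' {n : ℕ} (x y : F n) : ℕ := wlen (x⁻¹ * y)

/-- The cyclically reduced length of `a`. -/
def cycLen {n : ℕ} (a : F n) : ℕ := sInf { m | ∃ h : F n, wlen (h⁻¹ * a * h) = m }

/-- The vertex set of the minimal `A`-invariant subtree `T_A` of the Cayley tree:
the union of the axes of the nontrivial elements of `A`. -/
def treeVerts {n : ℕ} (A : Subgroup (F n)) : Set (F n) :=
  { h | ∃ a ∈ A, a ≠ 1 ∧ wlen (h⁻¹ * a * h) = cycLen a }

/-- `γ_w ⊆ S`: every prefix of the reduced word of `w` lies in the vertex set `S`. -/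
def pathIn {n : ℕ} (w : F n) (S : Set (F n)) : Prop :=
  ∀ m ≤ wlen w, FreeGroup.mk ((rword w).take m) ∈ S

/-- An element is cyclically reduced if the last letter of its reduced word is not the
inverse of the first letter. -/
def CyclicallyReduced {n : ℕ} (w : F n) : Prop :=
  ∀ x y : Letter n, (rword w).head? = some x → (rword w).getLast? = some y → y ≠ linv x

/-- `v` is a length-one extension of `w`. -/
def LengthOneExt {n : ℕ} (w v : F n) : Prop :=
  ∃ b : Letter n, v = w * letterE b ∧ wlen v = wlen w + 1

/-- `a` is an extension of `w`: the reduced word of `w` is a proper prefix of that of `a`. -/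
def ExtensionOf {n : ℕ} (w a : F n) : Prop :=
  rword w <+: rword a ∧ wlen w < wlen a

/-- `g` is a proper power. -/
def IsProperPower {n : ℕ} (g : F n) : Prop := ∃ (h : F n) (k : ℕ), 2 ≤ k ∧ g = h ^ k

section System

variable {n r : ℕ} (A : Fin r → Subgroup (F n))

/-- `[B] ∈ 𝒜`, i.e. `B` is a conjugate of one of the subgroups of the system. -/
def InSystem (B : Subgroup (F n)) : Prop := ∃ (i : Fin r) (g : F n), B = conjSub g (A i)

/-- The family `A` represents a subgroup system: finite rank subgroups distinct
from `{1}` and `F n`. -/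
def IsSystem : Prop := (∀ i, (A i).FG) ∧ (∀ i, A i ≠ ⊥) ∧ (∀ i, A i ≠ ⊤)

/-- The subgroup system is malnormal. -/
def SystemMalnormal : Prop :=
  (∀ i, Malnormal (A i)) ∧
  ∀ B₁ B₂ : Subgroup (F n), InSystem A B₁ → InSystem A B₂ → B₁ ≠ B₂ → B₁ ⊓ B₂ = ⊥

/-- `g` is `𝒜`-peripheral: trivial or contained in a conjugate of one of the `A i`. -/
def Peripheral (g : F n) : Prop := g = 1 ∨ ∃ B, InSystem A B ∧ g ∈ B

/-- The diameter of the intersection of the trees of two distinct subgroups of the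
system is at most `L`. -/
def DiamBound (L : ℕ) : Prop :=
  ∀ B₁ B₂ : Subgroup (F n), InSystem A B₁ → InSystem A B₂ → B₁ ≠ B₂ →
    ∀ x ∈ treeVerts B₁ ∩ treeVerts B₂, ∀ y ∈ treeVerts B₁ ∩ treeVerts B₂, dist' x y ≤ L

/-- `B ∈ Γ_i`: `B` is a conjugate of `A i` whose tree contains the base point `1`. -/
def GammaMem (i : Fin r) (B : Subgroup (F n)) : Prop :=
  (∃ g : F n, B = conjSub g (A i)) ∧ (1 : F n) ∈ treeVerts B

/-- The finite set `𝒞` of words of length `L+2` whose path is contained in no tree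
`T_B` with `B ∈ Γ_i`, for every `i`. -/
def Ccal (L : ℕ) : Set (F n) :=
  { w | wlen w = L + 2 ∧ ∀ (i : Fin r) (B : Subgroup (F n)), GammaMem A i B →
      ¬ pathIn w (treeVerts B) }

/-- `F_n − 𝒜`: the words containing an element of `𝒞` as a contiguous subword. -/
def FmA (L : ℕ) : Set (F n) := { w | ∃ x ∈ Ccal A L, rword x <:+: rword w }

/-- `S_k`: words of length `k` not containing any element of `𝒞` as a subword. -/
def Sk (L k : ℕ) : Set (F n) := { w | wlen w = k ∧ w ∉ FmA A L }

end System

/-! ### The boundary of `F n` -/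

/-- An infinite reduced word. -/
def IsRed {n : ℕ} (ξ : ℕ → Letter n) : Prop := ∀ i, ξ (i + 1) ≠ linv (ξ i)

/-- The Gromov boundary `∂F_n`, realized as the space of infinite reduced words,
topologized as a subspace of the product space. -/
def Boundary (n : ℕ) : Type := { ξ : ℕ → Letter n // IsRed ξ }

instance {n : ℕ} : TopologicalSpace (Boundary n) :=
  instTopologicalSpaceSubtype

/-- The length-`m` prefix of a boundary point. -/
def bpre {n : ℕ} (ξ : Boundary n) (m : ℕ) : List (Letter n) :=
  (List.range m).map ξ.1

/-- The reduced word of `w` is a prefix of the infinite word `ξ`. -/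
def wordPrefixOf {n : ℕ} (w : F n) (ξ : Boundary n) : Prop :=
  bpre ξ (wlen w) = rword w

/-- The boundary (limit set) `∂A ⊆ ∂F_n` of a subgroup `A`. -/
def limitSet {n : ℕ} (A : Subgroup (F n)) : Set (Boundary n) :=
  { ξ | ∀ m : ℕ, ∃ a ∈ A, bpre ξ m <+: rword a }

/-- `ξ = g^{+∞}`: `ξ` is the limit of the reduced words of the powers of `g`. -/
def IsPosLimit {n : ℕ} (g : F n) (ξ : Boundary n) : Prop :=
  ∀ m : ℕ, ∃ N : ℕ, ∀ k ≥ N, bpre ξ m <+: rword (g ^ k)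

/-- The number of letters cancelled when concatenating the word `l` with the
infinite reduced word `ξ`. -/
def cancelLen {n : ℕ} (l : List (Letter n)) (ξ : ℕ → Letter n) : ℕ :=
  sSup { j | j ≤ l.length ∧ ∀ i < j, l.reverse[i]? = some (linv (ξ i)) }

/-- The sequence underlying the action of `g` on a boundary point: left multiplication
followed by cancellation. -/
def actSeq {n : ℕ} (g : F n) (ξ : ℕ → Letter n) : ℕ → Letter n :=
  fun m =>
    if h : m < (rword g).length - cancelLen (rword g) ξ then
      (rword g).get ⟨m, by omega⟩
    else ξ (m - ((rword g).length - cancelLen (rword g) ξ) + cancelLen (rword g) ξ)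

/-- The action of `F n` on its boundary: left multiplication followed by cancellation.
(The sequence `actSeq g ξ.1` is always reduced, so the first branch always applies.) -/
def bAct {n : ℕ} (g : F n) (ξ : Boundary n) : Boundary n :=
  if h : IsRed (actSeq g ξ.1) then ⟨actSeq g ξ.1, h⟩ else ξ

/-! ### The double boundary -/

/-- The diagonal action of `F n` on `Sym2 (∂F_n)`, whose restriction to the set of
non-diagonal classes is the action on the double boundary `∂²F_n`. -/
def dbAct {n : ℕ} (g : F n) : Sym2 (Boundary n) → Sym2 (Boundary n) := Sym2.map (bAct g)

/-- `∂²𝒜`: the classes `{ξ,η}` with both endpoints in `g·∂A_i = ∂(gA_ig⁻¹)` for some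
`i` and `g`. -/
def dblBndA {n r : ℕ} (A : Fin r → Subgroup (F n)) : Set (Sym2 (Boundary n)) :=
  { z | ∃ (i : Fin r) (g : F n) (ξ η : Boundary n), z = s(ξ, η) ∧
      ξ ∈ limitSet (conjSub g (A i)) ∧ η ∈ limitSet (conjSub g (A i)) }

/-- The double boundary `∂²(F_n,𝒜)` of `F n` relative to `𝒜`, as a subset of
`Sym2 (∂F_n)`: non-diagonal classes not lying in `∂²𝒜`. -/
def relSet {n r : ℕ} (A : Fin r → Subgroup (F n)) : Set (Sym2 (Boundary n)) :=
  { z | ¬ z.IsDiag } \ dblBndA A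

/-- The cylinder set `C(γ_w) ⊆ ∂²F_n` of the geodesic path from `1` to `w`. -/
def cylinder {n : ℕ} (w : F n) : Set (Sym2 (Boundary n)) :=
  { z | ∃ ξ η : Boundary n, z = s(ξ, η) ∧ ξ.1 0 ≠ η.1 0 ∧
      (wordPrefixOf w ξ ∨ wordPrefixOf w η) }

instance {n : ℕ} : MeasurableSpace (Sym2 (Boundary n)) := borel _

/-- The action of `g ∈ F n` on `∂²(F_n,𝒜)`. (The action of `F n` preserves
`∂²(F_n,𝒜)`, so the first branch always applies.) -/
def relAct {n r : ℕ} (A : Fin r → Subgroup (F n)) (g : F n) (z : ↥(relSet A)) :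
    ↥(relSet A) :=
  if h : dbAct g z.1 ∈ relSet A then ⟨dbAct g z.1, h⟩ else z

/-- The cylinder `C(γ_w)` as a subset of `∂²(F_n,𝒜)`. -/
def relCyl {n r : ℕ} (A : Fin r → Subgroup (F n)) (w : F n) : Set ↥(relSet A) :=
  Subtype.val ⁻¹' cylinder w

/-- The translated cylinder `g·C(γ_w)` as a subset of `∂²(F_n,𝒜)`. -/
def relCylG {n r : ℕ} (A : Fin r → Subgroup (F n)) (g w : F n) : Set ↥(relSet A) :=
  Subtype.val ⁻¹' (dbAct g '' cylinder w)

/-- A relative current on `(F_n,𝒜)`: an `F_n`-invariant Radon measure on the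
locally compact space `∂²(F_n,𝒜)` (finite on compacts, outer regular, inner regular
on open sets). -/
def IsRelCurrent {n r : ℕ} (A : Fin r → Subgroup (F n)) (μ : Measure ↥(relSet A)) : Prop :=
  (∀ (g : F n) (s : Set ↥(relSet A)), MeasurableSet s → μ (relAct A g ⁻¹' s) = μ s) ∧
  μ.Regular

/-- The `F_n`-orbit of a point of `Sym2 (∂F_n)`, inside `∂²(F_n,𝒜)`. -/
def orbitOf {n r : ℕ} (A : Fin r → Subgroup (F n)) (z : Sym2 (Boundary n)) :
    Set ↥(relSet A) :=
  { y | ∃ h : F n, (y : Sym2 (Boundary n)) = dbAct h z }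

/-! ### Reduced words in free groups -/

section FreeGroupWords

open FreeGroup

variable {α : Type*}

theorem not_fst_eq_imp_snd_eq_iff {x y : α × Bool} :
    ¬ (x.1 = y.1 → x.2 = y.2) ↔ y = (x.1, !x.2) := by
  rcases x with ⟨a, _ | _⟩ <;> rcases y with ⟨b, _ | _⟩ <;> simp [eq_comm]

theorem exists_isReduced_append_of_isReduced {u v : List (α × Bool)} (hu : IsReduced u)
    (hv : IsReduced v) : ∃ p c q, u = p ++ c ∧ v = invRev c ++ q ∧ IsReduced (p ++ q) := by
  induction u using List.reverseRecOn generalizing v with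
  | nil => exact ⟨[], [], v, rfl, rfl, hv⟩
  | append_singleton u x ih =>
    rcases v with _ | ⟨y, v⟩
    · exact ⟨u ++ [x], [], [], by simp, rfl, by simpa using hu⟩
    by_cases hxy : x.1 = y.1 → x.2 = y.2
    · refine ⟨u ++ [x], [], y :: v, by simp, rfl, List.isChain_append.2 ⟨hu, hv, ?_⟩⟩
      simpa using hxy
    · obtain ⟨p, c, q, rfl, rfl, hpq⟩ := ih (hu.infix (List.prefix_append _ _).isInfix)
        (hv.infix (List.suffix_cons _ _).isInfix)
      obtain rfl := not_fst_eq_imp_snd_eq_iff.1 hxy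
      exact ⟨p, c ++ [x], q, by simp, by simp [invRev], hpq⟩

theorem exists_eq_cons_append_of_not_isCyclicallyReduced {l : List (α × Bool)} (hl : IsReduced l)
    (h : ¬ IsCyclicallyReduced l) : ∃ x t, l = x :: (t ++ [(x.1, !x.2)]) := by
  induction l using List.bidirectionalRec with
  | nil => exact absurd IsCyclicallyReduced.nil h
  | singleton x => exact absurd IsCyclicallyReduced.singleton h
  | cons_append x t y _ =>
    have hyx : ¬ (y.1 = x.1 → y.2 = x.2) := fun hyx =>
      h (isCyclicallyReduced_cons_append_iff.2 ⟨hl, hyx⟩)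
    obtain rfl := not_fst_eq_imp_snd_eq_iff.1 hyx
    exact ⟨(y.1, !y.2), t, by simp⟩

/-- A reduced word extends freely along a cyclically reduced word or along its inverse: the two
cannot both start with the inverse of the last letter of the word. -/
theorem isReduced_append_or_append_invRev {u w : List (α × Bool)} (hu : IsReduced u)
    (hw : IsCyclicallyReduced w) : IsReduced (u ++ w) ∨ IsReduced (u ++ invRev w) := by
  by_contra! h
  have hinv : IsReduced (invRev w) := by
    classical exact isReduced_iff_reduce_eq.2 (by rw [reduce_invRev, hw.isReduced.reduce_eq])
  obtain ⟨a, ha, x, hx, hax⟩ : ∃ a ∈ u.getLast?, ∃ x ∈ w.head?, ¬ (a.1 = x.1 → a.2 = x.2) := by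
    by_contra! hcon
    exact h.1 (List.isChain_append.2 ⟨hu, hw.isReduced, hcon⟩)
  obtain ⟨b, hb, y, hy, hby⟩ :
      ∃ b ∈ u.getLast?, ∃ y ∈ (invRev w).head?, ¬ (b.1 = y.1 → b.2 = y.2) := by
    by_contra! hcon
    exact h.2 (List.isChain_append.2 ⟨hu, hinv, hcon⟩)
  have hlast : (y.1, !y.2) ∈ w.getLast? := by
    obtain ⟨z, hz, rfl⟩ : ∃ z ∈ w.getLast?, (z.1, !z.2) = y := by
      simpa [invRev, List.head?_reverse, List.getLast?_map] using hy
    simpa using hz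
  have := hw.2 _ hlast _ hx
  have := Option.mem_unique ha hb
  grind

variable [DecidableEq α]

theorem toWord_mk_of_isReduced {l : List (α × Bool)} (h : IsReduced l) : (mk l).toWord = l := by
  rw [toWord_mk, h.reduce_eq]

theorem toWord_mul_of_isReduced {x y : FreeGroup α} (h : IsReduced (x.toWord ++ y.toWord)) :
    (x * y).toWord = x.toWord ++ y.toWord := by
  rw [toWord_mul, h.reduce_eq]

theorem exists_toWord_mul_eq_append (x y : FreeGroup α) :
    ∃ p c q, x.toWord = p ++ c ∧ y.toWord = invRev c ++ q ∧ (x * y).toWord = p ++ q := by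
  obtain ⟨p, c, q, hx, hy, hpq⟩ := exists_isReduced_append_of_isReduced
    (isReduced_toWord (x := x)) (isReduced_toWord (x := y))
  refine ⟨p, c, q, hx, hy, ?_⟩
  have hxy : x * y = mk (p ++ q) := by
    rw [← mk_toWord (x := x), ← mk_toWord (x := y), hx, hy]
    simp only [← mul_mk, ← inv_mk]
    group
  rw [hxy, toWord_mk_of_isReduced hpq]

theorem prefix_toWord_mul {x y : FreeGroup α} {p : List (α × Bool)} (hp : p <+: x.toWord)
    (hlen : p.length + y.norm ≤ x.norm) : p <+: (x * y).toWord := by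
  obtain ⟨p', c, q, hx, hy, hxy⟩ := exists_toWord_mul_eq_append x y
  have hlen' : p.length ≤ p'.length := by
    simp only [FreeGroup.norm, hx, hy, List.length_append, invRev_length] at hlen
    omega
  rw [hxy]
  exact (List.prefix_of_prefix_length_le hp (hx ▸ List.prefix_append _ _) hlen').trans
    (List.prefix_append _ _)

theorem toWord_mul_prefix_toWord_mul {x y g : FreeGroup α} (h : x.toWord <+: y.toWord)
    (hlen : g.norm ≤ x.norm) : (g * x).toWord <+: (g * y).toWord := by
  obtain ⟨p, c, q, hg, hy, hgy⟩ := exists_toWord_mul_eq_append g y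
  have hc : (invRev c).length ≤ x.toWord.length := by
    simp only [FreeGroup.norm, hg, List.length_append] at hlen
    rw [invRev_length]
    omega
  obtain ⟨q', hq'⟩ := List.prefix_of_prefix_length_le (hy ▸ List.prefix_append _ q) h hc
  have hq : q' <+: q := by rwa [hy, ← hq', List.prefix_append_right_inj] at h
  have hpq : p ++ q' <+: (g * y).toWord := by rwa [hgy, List.prefix_append_right_inj]
  have hgx : g * x = mk (p ++ q') := by
    rw [← mk_toWord (x := g), ← mk_toWord (x := x), hg, ← hq']
    simp only [← mul_mk, ← inv_mk]
    group
  rwa [hgx, toWord_mk_of_isReduced (isReduced_toWord.infix hpq.isInfix)]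

theorem norm_pow_le (x : FreeGroup α) (k : ℕ) : (x ^ k).norm ≤ k * x.norm := by
  induction k with
  | zero => simp
  | succ k ih =>
    rw [pow_succ, Nat.succ_mul]
    exact (FreeGroup.norm_mul_le _ _).trans (by omega)

theorem toWord_pow_of_isCyclicallyReduced {x : FreeGroup α} (hx : IsCyclicallyReduced x.toWord)
    (k : ℕ) : (x ^ k).toWord = (List.replicate k x.toWord).flatten := by
  rw [toWord_pow, (hx.flatten_replicate k).isReduced.reduce_eq]

theorem norm_pow_of_isCyclicallyReduced {x : FreeGroup α} (hx : IsCyclicallyReduced x.toWord)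
    (k : ℕ) : (x ^ k).norm = k * x.norm := by
  simp [FreeGroup.norm, toWord_pow_of_isCyclicallyReduced hx]

/-- Otherwise the lengths of the powers of `x`, which grow at rate `x.norm`, would violate the
triangle inequality. -/
theorem norm_le_norm_conj_of_isCyclicallyReduced {x : FreeGroup α}
    (hx : IsCyclicallyReduced x.toWord) (g : FreeGroup α) : x.norm ≤ (g⁻¹ * x * g).norm := by
  by_contra! hlt
  set k := 2 * g.norm + 1
  have hpow : x ^ k = g * (g⁻¹ * x * g) ^ k * g⁻¹ := by
    rw [← conj_pow]; group
  have hle : k * x.norm ≤ 2 * g.norm + k * (g⁻¹ * x * g).norm :=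
    calc k * x.norm = (g * (g⁻¹ * x * g) ^ k * g⁻¹).norm := by
          rw [← hpow, norm_pow_of_isCyclicallyReduced hx]
      _ ≤ g.norm + ((g⁻¹ * x * g) ^ k).norm + g⁻¹.norm :=
          (FreeGroup.norm_mul_le _ _).trans (Nat.add_le_add_right (FreeGroup.norm_mul_le _ _) _)
      _ ≤ 2 * g.norm + k * (g⁻¹ * x * g).norm := by
          rw [norm_inv_eq]
          have := norm_pow_le (g⁻¹ * x * g) k
          omega
  have hgrow : k * ((g⁻¹ * x * g).norm + 1) ≤ k * x.norm := Nat.mul_le_mul_left _ hlt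
  rw [Nat.mul_add_one] at hgrow
  omega

theorem isCyclicallyReduced_iff_forall_norm_le {x : FreeGroup α} :
    IsCyclicallyReduced x.toWord ↔ ∀ g : FreeGroup α, x.norm ≤ (g⁻¹ * x * g).norm := by
  refine ⟨norm_le_norm_conj_of_isCyclicallyReduced, fun hmin => ?_⟩
  by_contra hx
  obtain ⟨a, t, ht⟩ := exists_eq_cons_append_of_not_isCyclicallyReduced isReduced_toWord hx
  have hconj : (mk [a])⁻¹ * x * mk [a] = mk t := by
    rw [← mk_toWord (x := x), ht,
      show a :: (t ++ [(a.1, !a.2)]) = [a] ++ (t ++ invRev [a]) from rfl, ← mul_mk, ← mul_mk,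
      ← inv_mk]
    group
  have hle : x.norm ≤ t.length := by
    have := hmin (mk [a])
    rw [hconj] at this
    exact this.trans norm_mk_le
  simp only [FreeGroup.norm, ht, List.length_cons, List.length_append] at hle
  omega

theorem isCyclicallyReduced_toWord_inv {x : FreeGroup α} (hx : IsCyclicallyReduced x.toWord) :
    IsCyclicallyReduced x⁻¹.toWord := by
  rw [isCyclicallyReduced_iff_forall_norm_le] at hx ⊢
  intro g
  rw [show g⁻¹ * x⁻¹ * g = (g⁻¹ * x * g)⁻¹ by group, FreeGroup.norm_inv_eq, FreeGroup.norm_inv_eq]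
  exact hx g

/-- One of `a`, `b` and `a * b` is cyclically reduced. -/
theorem exists_isCyclicallyReduced_of_head?_ne {H : Subgroup (FreeGroup α)} {a b : FreeGroup α}
    (ha : a ∈ H) (hb : b ∈ H) {x y : α × Bool} (hx : x ∈ a.toWord.head?)
    (hy : y ∈ b.toWord.head?) (hxy : x ≠ y) : ∃ c ∈ H, c ≠ 1 ∧ IsCyclicallyReduced c.toWord := by
  have ne_one {c : FreeGroup α} {z : α × Bool} (hz : z ∈ c.toWord.head?) : c ≠ 1 := by
    rintro rfl
    simp at hz
  by_cases hca : IsCyclicallyReduced a.toWord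
  · exact ⟨a, ha, ne_one hx, hca⟩
  by_cases hcb : IsCyclicallyReduced b.toWord
  · exact ⟨b, hb, ne_one hy, hcb⟩
  obtain ⟨x', s, hs⟩ := exists_eq_cons_append_of_not_isCyclicallyReduced isReduced_toWord hca
  obtain ⟨y', t, ht⟩ := exists_eq_cons_append_of_not_isCyclicallyReduced isReduced_toWord hcb
  obtain rfl : x' = x := by simpa [hs] using hx
  obtain rfl : y' = y := by simpa [ht] using hy
  have hjunction {u v : α × Bool} (huv : u ≠ v) : u.1 = v.1 → (!u.2) = v.2 := by
    by_contra h
    exact huv (by simpa using (not_fst_eq_imp_snd_eq_iff (x := (u.1, !u.2)).1 h).symm)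
  have hab : (a * b).toWord = a.toWord ++ b.toWord := by
    refine toWord_mul_of_isReduced (List.isChain_append.2 ⟨isReduced_toWord, isReduced_toWord, ?_⟩)
    simpa [hs, ht, List.getLast?_cons] using hjunction hxy
  refine ⟨a * b, mul_mem ha hb, ne_one (z := x') (by simp [hab, hs]), isReduced_toWord, ?_⟩
  simpa [hab, hs, ht, List.getLast?_cons] using hjunction hxy.symm

theorem prefix_toWord_conj_pow {h c : FreeGroup α} (hc : IsCyclicallyReduced c.toWord)
    (hc1 : c ≠ 1) (hred : IsReduced (h.toWord ++ c.toWord)) :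
    h.toWord <+: (h * c ^ h.norm * h⁻¹).toWord := by
  rcases eq_or_ne h 1 with rfl | h1
  · simp
  have hword : (h * c ^ h.norm).toWord = h.toWord ++ (c ^ h.norm).toWord := by
    refine toWord_mul_of_isReduced ?_
    rw [toWord_pow_of_isCyclicallyReduced hc]
    simpa using IsReduced.append_flatten_replicate_append (L₃ := []) hc (by simpa using hred)
      (mt FreeGroup.norm_eq_zero.1 h1)
  refine prefix_toWord_mul (hword ▸ List.prefix_append _ _) ?_
  have hpos : 0 < c.norm := Nat.pos_of_ne_zero (mt FreeGroup.norm_eq_zero.1 hc1)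
  calc h.toWord.length + h⁻¹.norm ≤ h.norm + h.norm * c.norm := by
        rw [norm_inv_eq]
        exact Nat.add_le_add_left (Nat.le_mul_of_pos_right _ hpos) _
    _ = (h * c ^ h.norm).norm := by
        rw [← norm_pow_of_isCyclicallyReduced hc]
        exact (List.length_append.symm.trans (congrArg List.length hword.symm))

/-- The axis of `a` passes through `h` and leaves it in two directions, at least one of which
points away from `1`. -/
theorem exists_mem_zpowers_prefix_toWord {a h : FreeGroup α} (ha : a ≠ 1)
    (hc : IsCyclicallyReduced (h⁻¹ * a * h).toWord) :
    ∃ b ∈ Subgroup.zpowers a, h.toWord <+: b.toWord := by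
  have hc1 : h⁻¹ * a * h ≠ 1 := by simpa [mul_assoc, inv_mul_eq_one] using ha
  have hconj (k : ℤ) : h * (h⁻¹ * a * h) ^ k * h⁻¹ = a ^ k := by
    rw [← conj_zpow]
    group
  rcases isReduced_append_or_append_invRev (isReduced_toWord (x := h)) hc with hred | hred
  · refine ⟨a ^ h.norm, Subgroup.npow_mem_zpowers a _, ?_⟩
    have := prefix_toWord_conj_pow hc hc1 hred
    rwa [← zpow_natCast, hconj, zpow_natCast] at this
  · refine ⟨a ^ (-(h.norm : ℤ)), ⟨_, rfl⟩, ?_⟩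
    have := prefix_toWord_conj_pow (h := h) (isCyclicallyReduced_toWord_inv hc)
      (inv_ne_one.2 hc1) (by rwa [toWord_inv])
    rwa [← zpow_natCast, inv_zpow', hconj] at this

end FreeGroupWords

/-! ### Infinite reduced words and the action on the boundary -/

section Boundary

open FreeGroup

/-- The word formed by the first `m` letters of a sequence. By definition `bpre ξ` is
`seqPrefix ξ.1`; arbitrary sequences are allowed since `actSeq` is not reduced a priori. -/
def seqPrefix {α : Type*} (f : ℕ → α) (m : ℕ) : List α := (List.range m).map f

theorem length_seqPrefix {α : Type*} (f : ℕ → α) (m : ℕ) : (seqPrefix f m).length = m := by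
  simp [seqPrefix]

theorem seqPrefix_add {α : Type*} (f : ℕ → α) (m k : ℕ) :
    seqPrefix f (m + k) = seqPrefix f m ++ seqPrefix (fun i => f (m + i)) k := by
  simp [seqPrefix, List.range_add, Function.comp_def]

theorem seqPrefix_succ {α : Type*} (f : ℕ → α) (m : ℕ) :
    seqPrefix f (m + 1) = seqPrefix f m ++ [f m] :=
  seqPrefix_add f m 1

theorem seqPrefix_prefix_iff {α : Type*} {f : ℕ → α} {m : ℕ} {l : List α} :
    seqPrefix f m <+: l ↔ ∀ i < m, l[i]? = some (f i) := by
  simp [List.prefix_iff_getElem?, seqPrefix]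

variable {n : ℕ}

theorem ne_linv_iff {x y : Letter n} : y ≠ linv x ↔ (x.1 = y.1 → x.2 = y.2) :=
  not_iff_comm.1 not_fst_eq_imp_snd_eq_iff

theorem linv_linv (x : Letter n) : linv (linv x) = x := by
  simp [linv]

theorem isRed_iff_forall_isReduced {f : ℕ → Letter n} :
    IsRed f ↔ ∀ m, IsReduced (seqPrefix f m) := by
  simp only [IsRed, ne_linv_iff, FreeGroup.IsReduced, List.isChain_iff_getElem, seqPrefix,
    List.length_map, List.length_range, List.getElem_map, List.getElem_range]
  exact ⟨fun h _ i _ => h i, fun h i => h (i + 2) i (by omega)⟩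

theorem invRev_seqPrefix_suffix_iff {ξ : ℕ → Letter n} {j : ℕ} {l : List (Letter n)} :
    invRev (seqPrefix ξ j) <:+ l ↔ j ≤ l.length ∧ ∀ i < j, l.reverse[i]? = some (linv (ξ i)) := by
  have hrev : (invRev (seqPrefix ξ j)).reverse = seqPrefix (fun i => linv (ξ i)) j := by
    simp [invRev, seqPrefix, Function.comp_def, linv]
  rw [← List.reverse_prefix, hrev, seqPrefix_prefix_iff, iff_and_self]
  intro h
  simpa [length_seqPrefix] using (seqPrefix_prefix_iff.2 h).length_le

theorem exists_eq_append_invRev_seqPrefix_cancelLen (l : List (Letter n)) (ξ : ℕ → Letter n) :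
    ∃ p, l = p ++ invRev (seqPrefix ξ (cancelLen l ξ)) ∧
      ∀ x ∈ p.getLast?, x ≠ linv (ξ (cancelLen l ξ)) := by
  let S : Set ℕ := {j | invRev (seqPrefix ξ j) <:+ l}
  have hS : cancelLen l ξ = sSup S :=
    congrArg sSup (Set.ext fun j => invRev_seqPrefix_suffix_iff.symm)
  have hbdd : BddAbove S := ⟨l.length, fun j hj => (invRev_seqPrefix_suffix_iff.1 hj).1⟩
  obtain ⟨p, hp⟩ : cancelLen l ξ ∈ S := hS ▸ Nat.sSup_mem ⟨0, List.nil_suffix⟩ hbdd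
  refine ⟨p, hp.symm, fun x hx hxξ => ?_⟩
  obtain ⟨p, rfl⟩ := List.getLast?_eq_some_iff.1 hx
  have hmem : cancelLen l ξ + 1 ∈ S := by
    refine ⟨p, Eq.trans ?_ hp⟩
    simp [hxξ, seqPrefix_succ, invRev, linv]
  exact absurd (hS ▸ le_csSup hbdd hmem) (Nat.not_succ_le_self _)

theorem exists_seqPrefix_actSeq (g : F n) (ξ : ℕ → Letter n) :
    ∃ p c, rword g = p ++ invRev (seqPrefix ξ c) ∧ (∀ x ∈ p.getLast?, x ≠ linv (ξ c)) ∧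
      ∀ k, seqPrefix (actSeq g ξ) (p.length + k) = p ++ seqPrefix (fun i => ξ (c + i)) k := by
  obtain ⟨p, hp, hlast⟩ := exists_eq_append_invRev_seqPrefix_cancelLen (rword g) ξ
  refine ⟨p, _, hp, hlast, fun k => ?_⟩
  have hlen : (rword g).length - cancelLen (rword g) ξ = p.length := by
    have := congrArg List.length hp
    rw [List.length_append, invRev_length, length_seqPrefix] at this
    omega
  rw [seqPrefix_add]
  congr 1
  · refine List.ext_getElem (length_seqPrefix _ _) fun i hi hi' => ?_
    have : (rword g)[i]? = some p[i] := by
      rw [hp, List.getElem?_append_left hi', List.getElem?_eq_getElem hi']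
    simp only [seqPrefix, List.getElem_map, List.getElem_range, actSeq, hlen, hi', dite_true]
    exact (List.getElem_eq_iff _).2 this
  · congr 1
    funext i
    simp [actSeq, hlen, add_comm]

theorem isRed_actSeq (g : F n) {ξ : ℕ → Letter n} (hξ : IsRed ξ) : IsRed (actSeq g ξ) := by
  obtain ⟨p, c, hg, hlast, hact⟩ := exists_seqPrefix_actSeq g ξ
  rw [isRed_iff_forall_isReduced] at hξ ⊢
  intro m
  have hinfix : seqPrefix (actSeq g ξ) m <:+: p ++ seqPrefix (fun i => ξ (c + i)) m := by
    rw [← hact, add_comm, seqPrefix_add]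
    exact (List.prefix_append _ _).isInfix
  refine IsReduced.infix (List.isChain_append.2 ⟨?_, ?_, ?_⟩) hinfix
  · exact IsReduced.infix isReduced_toWord ⟨[], _, hg.symm⟩
  · exact (hξ (c + m)).infix (seqPrefix_add ξ c m ▸ List.suffix_append _ _).isInfix
  · rintro x hx y hy
    obtain ⟨-, rfl⟩ : m ≠ 0 ∧ ξ c = y := by simpa [seqPrefix, List.head?_range] using hy
    refine ne_linv_iff.1 fun hy => hlast x hx ?_
    rw [hy, linv_linv]

theorem bAct_val (g : F n) (ξ : Boundary n) : (bAct g ξ).1 = actSeq g ξ.1 :=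
  congrArg Subtype.val (dif_pos (isRed_actSeq g ξ.2))

theorem isReduced_bpre (ξ : Boundary n) (m : ℕ) : IsReduced (bpre ξ m) :=
  isRed_iff_forall_isReduced.1 ξ.2 m

theorem length_bpre (ξ : Boundary n) (m : ℕ) : (bpre ξ m).length = m :=
  length_seqPrefix _ _

/-- The vertices of the geodesic ray of the Cayley tree from `1` to a boundary point. -/
def rayVertex (ξ : Boundary n) (m : ℕ) : F n := mk (bpre ξ m)

theorem rword_rayVertex (ξ : Boundary n) (m : ℕ) : rword (rayVertex ξ m) = bpre ξ m :=
  toWord_mk_of_isReduced (isReduced_bpre ξ m)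

theorem wlen_rayVertex (ξ : Boundary n) (m : ℕ) : wlen (rayVertex ξ m) = m := by
  rw [wlen, rword_rayVertex, length_bpre]

/-- The boundary point obtained from `ξ` by deleting its first `k` letters. -/
def Boundary.drop (ξ : Boundary n) (k : ℕ) : Boundary n :=
  ⟨fun i => ξ.1 (k + i), fun i => ξ.2 (k + i)⟩

theorem bpre_succ (ξ : Boundary n) (m : ℕ) : bpre ξ (m + 1) = bpre ξ m ++ [ξ.1 m] :=
  seqPrefix_succ _ _

theorem bpre_add (ξ : Boundary n) (k m : ℕ) : bpre ξ (k + m) = bpre ξ k ++ bpre (ξ.drop k) m :=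
  seqPrefix_add _ _ _

theorem rayVertex_add (ξ : Boundary n) (k m : ℕ) :
    rayVertex ξ (k + m) = rayVertex ξ k * rayVertex (ξ.drop k) m := by
  rw [rayVertex, bpre_add, ← mul_mk]
  rfl

theorem exists_mul_rayVertex_eq (g : F n) (ξ : Boundary n) :
    ∃ c ≤ wlen g, ∀ k, g * rayVertex ξ (c + k) = rayVertex (bAct g ξ) (wlen g - c + k) := by
  obtain ⟨p, c, hg, -, hact⟩ := exists_seqPrefix_actSeq g ξ.1
  have hlen : wlen g = p.length + c := by
    rw [wlen, hg, List.length_append, invRev_length, length_seqPrefix]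
  refine ⟨c, by omega, fun k => ?_⟩
  have hgmk : g = mk p * (rayVertex ξ c)⁻¹ := by
    rw [← mk_toWord (x := g), show toWord g = _ from hg, ← mul_mk, ← inv_mk]
    rfl
  have hbpre : bpre (bAct g ξ) (p.length + k) = p ++ bpre (ξ.drop c) k := by
    rw [bpre, bAct_val]
    exact hact k
  rw [rayVertex_add, hlen, Nat.add_sub_cancel, rayVertex.eq_1 (bAct g ξ), hbpre, ← mul_mk, hgmk]
  group
  rfl

theorem eq_of_rayVertex_add_eq {ξ η : Boundary n} {a b : ℕ}
    (h : ∀ k, rayVertex ξ (a + k) = rayVertex η (b + k)) : ξ = η := by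
  obtain rfl : a = b := by simpa [wlen_rayVertex] using congrArg wlen (h 0)
  refine Subtype.ext (funext fun i => ?_)
  have := congrArg (fun g => (rword g)[i]?) (h (i + 1))
  simpa [rword_rayVertex, bpre, show i < a + (i + 1) by omega] using this

theorem bAct_eq_of_mul_rayVertex_eq {g : F n} {ξ η : Boundary n} {a b : ℕ}
    (h : ∀ k, g * rayVertex ξ (a + k) = rayVertex η (b + k)) : bAct g ξ = η := by
  obtain ⟨c, -, hc⟩ := exists_mul_rayVertex_eq g ξ
  refine eq_of_rayVertex_add_eq (a := wlen g - c + a) (b := b + c) fun k => ?_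
  rw [add_assoc, ← hc, add_assoc, ← h, add_left_comm]

theorem bAct_one (ξ : Boundary n) : bAct 1 ξ = ξ :=
  bAct_eq_of_mul_rayVertex_eq (a := 0) (b := 0) fun _ => one_mul _

theorem bAct_mul (g h : F n) (ξ : Boundary n) : bAct (g * h) ξ = bAct g (bAct h ξ) := by
  obtain ⟨c, -, hc⟩ := exists_mul_rayVertex_eq h ξ
  obtain ⟨d, -, hd⟩ := exists_mul_rayVertex_eq g (bAct h ξ)
  refine bAct_eq_of_mul_rayVertex_eq (a := c + d) (b := wlen g - d + (wlen h - c)) fun k => ?_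
  rw [add_assoc, mul_assoc, hc, add_assoc, ← hd]
  congr 2
  omega

theorem bpre_prefix_bpre (ξ : Boundary n) {m M : ℕ} (h : m ≤ M) : bpre ξ m <+: bpre ξ M := by
  obtain ⟨k, rfl⟩ := Nat.exists_eq_add_of_le h
  exact bpre_add ξ m k ▸ List.prefix_append _ _

theorem bpre_bAct_prefix (g : F n) (ξ : Boundary n) {m M : ℕ} (h : m + wlen g ≤ M) :
    bpre (bAct g ξ) m <+: rword (g * rayVertex ξ M) := by
  obtain ⟨c, hcg, hc⟩ := exists_mul_rayVertex_eq g ξ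
  obtain ⟨k, rfl⟩ := Nat.exists_eq_add_of_le (show c ≤ M by omega)
  rw [hc, rword_rayVertex]
  exact bpre_prefix_bpre _ (by omega)

theorem isLocallyConstant_apply (i : ℕ) : IsLocallyConstant fun ξ : Boundary n => ξ.1 i :=
  (IsLocallyConstant.iff_continuous _).2
    ((continuous_apply (A := fun _ => Letter n) i).comp
      (continuous_subtype_val : Continuous fun ξ : Boundary n => ξ.1))

theorem isLocallyConstant_bpre (m : ℕ) : IsLocallyConstant fun ξ : Boundary n => bpre ξ m := by
  induction m with
  | zero => exact IsLocallyConstant.const []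
  | succ m ih =>
    simp only [bpre_succ]
    exact ih.comp₂ (isLocallyConstant_apply m) fun l x => l ++ [x]

theorem isLocallyConstant_bAct_apply (g : F n) (i : ℕ) :
    IsLocallyConstant fun ξ : Boundary n => (bAct g ξ).1 i := by
  have hletter : (some ∘ fun ξ : Boundary n => (bAct g ξ).1 i) =
      (fun l => (rword (g * mk l))[i]?) ∘ fun ξ => bpre ξ (i + 1 + wlen g) := funext fun ξ =>
    (seqPrefix_prefix_iff.1 (bpre_bAct_prefix g ξ le_rfl) i i.lt_succ_self).symm
  exact IsLocallyConstant.desc _ some (hletter ▸ (isLocallyConstant_bpre _).comp _)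
    (Option.some_injective _)

theorem continuous_bAct (g : F n) : Continuous (bAct g) :=
  continuous_induced_rng.2
    (continuous_pi fun i => (isLocallyConstant_bAct_apply g i).continuous)

end Boundary

/-! ### Minimal subtrees and limit sets -/

section Trees

variable {n : ℕ}

theorem mem_conjSub {g x : F n} {B : Subgroup (F n)} : x ∈ conjSub g B ↔ g⁻¹ * x * g ∈ B := by
  simp only [conjSub, Subgroup.mem_map, MulEquiv.coe_toMonoidHom, MulAut.conj_apply]
  refine ⟨?_, fun h => ⟨_, h, by group⟩⟩
  rintro ⟨y, hy, rfl⟩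
  convert hy using 1
  group

theorem mul_mul_inv_mem_conjSub {g a : F n} {B : Subgroup (F n)} (ha : a ∈ B) :
    g * a * g⁻¹ ∈ conjSub g B :=
  Subgroup.mem_map_of_mem _ ha

theorem conjSub_one (B : Subgroup (F n)) : conjSub 1 B = B := by
  ext x
  simp [mem_conjSub]

theorem conjSub_mul (g h : F n) (B : Subgroup (F n)) :
    conjSub (g * h) B = conjSub g (conjSub h B) := by
  ext x
  simp only [mem_conjSub, mul_inv_rev, mul_assoc]

theorem wlen_conj_eq_cycLen_iff {a h : F n} :
    wlen (h⁻¹ * a * h) = cycLen a ↔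
      FreeGroup.IsCyclicallyReduced (FreeGroup.toWord (h⁻¹ * a * h)) := by
  rw [isCyclicallyReduced_iff_forall_norm_le]
  refine ⟨fun hmin g => ?_, fun hmin => ?_⟩
  · refine hmin.trans_le (Nat.sInf_le ⟨h * g, ?_⟩)
    rw [mul_inv_rev]
    simp only [mul_assoc]
    rfl
  · refine le_antisymm (le_csInf ⟨_, h, rfl⟩ ?_) (Nat.sInf_le ⟨h, rfl⟩)
    rintro _ ⟨k, rfl⟩
    refine (hmin (h⁻¹ * k)).trans_eq ?_
    congr 1
    group

theorem mem_treeVerts_iff {B : Subgroup (F n)} {h : F n} :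
    h ∈ treeVerts B ↔ ∃ a ∈ B, a ≠ 1 ∧
      FreeGroup.IsCyclicallyReduced (FreeGroup.toWord (h⁻¹ * a * h)) := by
  simp only [treeVerts, Set.mem_ofPred_eq, wlen_conj_eq_cycLen_iff]

theorem mul_mem_treeVerts_conjSub {B : Subgroup (F n)} (g : F n) {h : F n}
    (hh : h ∈ treeVerts B) : g * h ∈ treeVerts (conjSub g B) := by
  rw [mem_treeVerts_iff] at hh ⊢
  obtain ⟨a, ha, ha1, hc⟩ := hh
  refine ⟨g * a * g⁻¹, mul_mul_inv_mem_conjSub ha, by simpa using ha1, ?_⟩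
  rwa [show (g * h)⁻¹ * (g * a * g⁻¹) * (g * h) = h⁻¹ * a * h by group]

theorem exists_prefix_of_mem_treeVerts {B : Subgroup (F n)} {h : F n} (hh : h ∈ treeVerts B) :
    ∃ b ∈ B, rword h <+: rword b := by
  obtain ⟨a, ha, ha1, hc⟩ := mem_treeVerts_iff.1 hh
  obtain ⟨b, hb, hhb⟩ := exists_mem_zpowers_prefix_toWord ha1 hc
  exact ⟨b, Subgroup.zpowers_le.2 ha hb, hhb⟩

theorem mem_limitSet_of_forall_mem_treeVerts {B : Subgroup (F n)} {ξ : Boundary n}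
    (h : ∀ m, rayVertex ξ m ∈ treeVerts B) : ξ ∈ limitSet B := fun m =>
  rword_rayVertex ξ m ▸ exists_prefix_of_mem_treeVerts (h m)

theorem bAct_mem_limitSet {B : Subgroup (F n)} (g : F n) {ξ : Boundary n} (hξ : ξ ∈ limitSet B) :
    bAct g ξ ∈ limitSet (conjSub g B) := by
  intro m
  obtain ⟨a, ha, hξa⟩ := hξ (m + wlen g + wlen g)
  rw [← rword_rayVertex] at hξa
  have hlong : wlen g ≤ wlen (rayVertex ξ (m + wlen g + wlen g)) := by
    rw [wlen_rayVertex]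
    omega
  have hga : bpre (bAct g ξ) (m + wlen g) <+: rword (g * a) :=
    (bpre_bAct_prefix g ξ le_rfl).trans (toWord_mul_prefix_toWord_mul hξa hlong)
  refine ⟨g * a * g⁻¹, mul_mul_inv_mem_conjSub ha, prefix_toWord_mul
    ((bpre_prefix_bpre _ (Nat.le_add_right _ _)).trans hga) ?_⟩
  rw [FreeGroup.norm_inv_eq]
  have := hga.length_le
  rwa [length_bpre] at this ⊢

theorem one_mem_treeVerts {B : Subgroup (F n)} {ξ η : Boundary n} (hξ : ξ ∈ limitSet B)
    (hη : η ∈ limitSet B) (h : ξ.1 0 ≠ η.1 0) : 1 ∈ treeVerts B := by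
  have hhead {ζ : Boundary n} {a : F n} (hζ : bpre ζ 1 <+: rword a) :
      ζ.1 0 ∈ (FreeGroup.toWord a).head? :=
    (List.head?_eq_getElem?).trans (seqPrefix_prefix_iff.1 hζ 0 one_pos)
  obtain ⟨a, ha, hξa⟩ := hξ 1
  obtain ⟨b, hb, hηb⟩ := hη 1
  obtain ⟨c, hc, hc1, hcyc⟩ :=
    exists_isCyclicallyReduced_of_head?_ne ha hb (hhead hξa) (hhead hηb) h
  exact mem_treeVerts_iff.2 ⟨c, hc, hc1, by simpa using hcyc⟩

end Trees

/-! ### Geodesics -/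

section Geodesics

variable {n : ℕ}

theorem bAct_inv_rayVertex_self (ξ : Boundary n) (k : ℕ) :
    bAct (rayVertex ξ k)⁻¹ ξ = ξ.drop k :=
  bAct_eq_of_mul_rayVertex_eq (a := k) (b := 0) fun m => by
    rw [rayVertex_add, inv_mul_cancel_left, zero_add]

theorem rword_inv_rayVertex_mul_rayVertex {ξ η : Boundary n} (h : ξ.1 0 ≠ η.1 0) (k m : ℕ) :
    rword ((rayVertex ξ k)⁻¹ * rayVertex η m) = FreeGroup.invRev (bpre ξ k) ++ bpre η m := by
  have hinv : FreeGroup.toWord (rayVertex ξ k)⁻¹ = FreeGroup.invRev (bpre ξ k) := by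
    rw [FreeGroup.toWord_inv]
    exact congrArg _ (rword_rayVertex ξ k)
  have hη : FreeGroup.toWord (rayVertex η m) = bpre η m := rword_rayVertex η m
  rw [rword, toWord_mul_of_isReduced, hinv, hη]
  refine List.isChain_append.2 ⟨FreeGroup.isReduced_toWord, FreeGroup.isReduced_toWord, ?_⟩
  rw [hinv, hη]
  intro x hx y hy
  obtain ⟨-, rfl⟩ : k ≠ 0 ∧ linv (ξ.1 0) = x := by
    simpa [FreeGroup.invRev, bpre, List.head?_range, linv] using hx
  obtain ⟨-, rfl⟩ : m ≠ 0 ∧ η.1 0 = y := by simpa [bpre, List.head?_range] using hy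
  refine ne_linv_iff.1 ?_
  rwa [linv_linv, ne_comm]

/-- The vertex `v` of the Cayley tree lies on the geodesic with ends `ξ` and `η`: the geodesic rays
from `v` to `ξ` and `η` start with different edges. -/
def OnGeodesic (v : F n) (ξ η : Boundary n) : Prop := (bAct v⁻¹ ξ).1 0 ≠ (bAct v⁻¹ η).1 0

theorem onGeodesic_rayVertex {ξ η : Boundary n} (h : ξ.1 0 ≠ η.1 0) (k : ℕ) :
    OnGeodesic (rayVertex ξ k) ξ η := by
  rw [OnGeodesic, bAct_inv_rayVertex_self]
  rcases k with _ | k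
  · rwa [show rayVertex ξ 0 = 1 from rfl, inv_one, bAct_one]
  have hfirst : (bAct (rayVertex ξ (k + 1))⁻¹ η).1 0 = linv (ξ.1 k) := by
    have hpre := bpre_bAct_prefix (rayVertex ξ (k + 1))⁻¹ η (m := 1) le_rfl
    rw [rword_inv_rayVertex_mul_rayVertex h] at hpre
    have := seqPrefix_prefix_iff.1 hpre 0 one_pos
    simpa [bpre_succ, FreeGroup.invRev, linv, eq_comm] using this
  rw [hfirst]
  exact ξ.2 k

theorem exists_onGeodesic {ξ η : Boundary n} (h : ξ ≠ η) : ∃ v, OnGeodesic v ξ η := by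
  have hdiff : ∃ k, ξ.1 k ≠ η.1 k := Function.ne_iff.1 fun heq => h (Subtype.ext heq)
  have hagree : rayVertex ξ (Nat.find hdiff) = rayVertex η (Nat.find hdiff) :=
    congrArg FreeGroup.mk (List.map_congr_left fun i hi =>
      not_not.1 (Nat.find_min hdiff (List.mem_range.1 hi)))
  refine ⟨rayVertex ξ (Nat.find hdiff), ?_⟩
  rw [OnGeodesic, bAct_inv_rayVertex_self, hagree, bAct_inv_rayVertex_self]
  exact Nat.find_spec hdiff

theorem OnGeodesic.mem_treeVerts {B : Subgroup (F n)} {v : F n} {ξ η : Boundary n}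
    (h : OnGeodesic v ξ η) (hξ : ξ ∈ limitSet B) (hη : η ∈ limitSet B) : v ∈ treeVerts B := by
  have := mul_mem_treeVerts_conjSub v
    (one_mem_treeVerts (bAct_mem_limitSet v⁻¹ hξ) (bAct_mem_limitSet v⁻¹ hη) h)
  rwa [mul_one, ← conjSub_mul, mul_inv_cancel, conjSub_one] at this

end Geodesics

/-! ### Segments of rays and the words of `𝒞` -/

section Covering

variable {n r L : ℕ} {A : Fin r → Subgroup (F n)}

theorem InSystem.conjSub {B : Subgroup (F n)} (hB : InSystem A B) (g : F n) :
    InSystem A (conjSub g B) := by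
  obtain ⟨i, h, rfl⟩ := hB
  exact ⟨i, g * h, (conjSub_mul g h (A i)).symm⟩

theorem pathIn_rayVertex_iff {ξ : Boundary n} {m : ℕ} {S : Set (F n)} :
    pathIn (rayVertex ξ m) S ↔ ∀ j ≤ m, rayVertex ξ j ∈ S := by
  simp only [pathIn, wlen_rayVertex, rword_rayVertex]
  refine forall₂_congr fun j hj => ?_
  have := List.prefix_iff_eq_take.1 (bpre_prefix_bpre ξ hj)
  rw [length_bpre] at this
  rw [rayVertex, ← this]

theorem rayVertex_mem_Ccal_iff {ξ : Boundary n} :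
    rayVertex ξ (L + 2) ∈ Ccal A L ↔
      ∀ B, InSystem A B → ∃ j ≤ L + 2, rayVertex ξ j ∉ treeVerts B := by
  simp only [Ccal, Set.mem_ofPred_eq, wlen_rayVertex, true_and, pathIn_rayVertex_iff, not_forall,
    exists_prop]
  refine ⟨fun h B hB => ?_, fun h i B hB => h B ⟨i, hB.1⟩⟩
  obtain ⟨i, hi⟩ := hB
  by_cases h1 : 1 ∈ treeVerts B
  · exact h i B ⟨hi, h1⟩
  · exact ⟨0, Nat.zero_le _, h1⟩

theorem exists_drop_mem_Ccal {ξ : Boundary n} {m : ℕ} (h : rayVertex ξ m ∈ FmA A L) :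
    ∃ k, rayVertex (ξ.drop k) (L + 2) ∈ Ccal A L := by
  obtain ⟨x, hx, s, t, hst⟩ := h
  have hxlen : (rword x).length = L + 2 := hx.1
  have hlen : m = s.length + (L + 2) + t.length := by
    simpa [rword_rayVertex, length_bpre, hxlen, add_assoc] using (congrArg List.length hst).symm
  refine ⟨s.length, ?_⟩
  rw [rword_rayVertex, hlen, bpre_add, bpre_add] at hst
  have hword : rword x = bpre (ξ.drop s.length) (L + 2) := by
    refine (List.append_inj (List.append_inj hst ?_).1 ?_).2
    · simp [length_bpre, hxlen]
    · simp [length_bpre]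
  rwa [rayVertex, ← hword, show FreeGroup.mk (rword x) = x from FreeGroup.mk_toWord]

theorem rayVertex_notMem_FmA {B : Subgroup (F n)} (hB : InSystem A B) {ξ : Boundary n}
    (hξ : ∀ m, rayVertex ξ m ∈ treeVerts B) (m : ℕ) : rayVertex ξ m ∉ FmA A L := by
  intro hm
  obtain ⟨k, hk⟩ := exists_drop_mem_Ccal hm
  obtain ⟨j, -, hj⟩ := rayVertex_mem_Ccal_iff.1 hk _ (hB.conjSub (rayVertex ξ k)⁻¹)
  have := mul_mem_treeVerts_conjSub (rayVertex ξ k)⁻¹ (hξ (k + j))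
  rw [rayVertex_add, inv_mul_cancel_left] at this
  exact hj this

theorem DiamBound.eq_of_rayVertex_mem (hdiam : DiamBound A L) {B₁ B₂ : Subgroup (F n)}
    (hB₁ : InSystem A B₁) (hB₂ : InSystem A B₂) {ξ : Boundary n} {a b : ℕ} (hab : a + L < b)
    (ha : rayVertex ξ a ∈ treeVerts B₁ ∩ treeVerts B₂)
    (hb : rayVertex ξ b ∈ treeVerts B₁ ∩ treeVerts B₂) : B₁ = B₂ := by
  by_contra hne
  obtain ⟨k, rfl⟩ := Nat.exists_eq_add_of_le (show a ≤ b by omega)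
  have := hdiam B₁ B₂ hB₁ hB₂ hne _ ha _ hb
  rw [dist', rayVertex_add, inv_mul_cancel_left, wlen_rayVertex] at this
  omega

/-- Consecutive segments of length `L + 2` of the ray overlap in a segment of length `L + 1`. -/
theorem exists_forall_rayVertex_mem_treeVerts (hdiam : DiamBound A L) {ξ : Boundary n}
    (h : ∀ k, rayVertex (ξ.drop k) (L + 2) ∉ Ccal A L) :
    ∃ B, InSystem A B ∧ ∀ m, rayVertex ξ m ∈ treeVerts B := by
  have hsegment (k : ℕ) :
      ∃ B, InSystem A B ∧ ∀ j ≤ L + 2, rayVertex ξ (k + j) ∈ treeVerts B := by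
    have := h k
    rw [rayVertex_mem_Ccal_iff] at this
    push Not at this
    obtain ⟨B, hB, hseg⟩ := this
    refine ⟨conjSub (rayVertex ξ k) B, hB.conjSub _, fun j hj => ?_⟩
    rw [rayVertex_add]
    exact mul_mem_treeVerts_conjSub _ (hseg j hj)
  choose B hB hseg using hsegment
  have hstep (k : ℕ) : B (k + 1) = B k := by
    refine hdiam.eq_of_rayVertex_mem (hB _) (hB _) (ξ := ξ) (a := k + 1) (b := k + (L + 2))
      (by omega) ⟨hseg (k + 1) 0 (by omega), hseg k 1 (by omega)⟩ ⟨?_, hseg k (L + 2) le_rfl⟩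
    rw [show k + (L + 2) = k + 1 + (L + 1) by omega]
    exact hseg (k + 1) (L + 1) (by omega)
  have hconst (k : ℕ) : B k = B 0 := by
    induction k with
    | zero => rfl
    | succ k ih => rw [hstep, ih]
  exact ⟨B 0, hB 0, fun m => hconst m ▸ hseg m 0 (Nat.zero_le _)⟩

end Covering

/-! ### The relative double boundary -/

section RelativeDoubleBoundary

variable {n r L : ℕ} {A : Fin r → Subgroup (F n)}

theorem mk_mem_dblBndA_iff {ξ η : Boundary n} :
    s(ξ, η) ∈ dblBndA A ↔ ∃ B, InSystem A B ∧ ξ ∈ limitSet B ∧ η ∈ limitSet B := by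
  refine ⟨?_, ?_⟩
  · rintro ⟨i, g, ξ', η', heq, hξ, hη⟩
    rcases Sym2.eq_iff.1 heq with ⟨rfl, rfl⟩ | ⟨rfl, rfl⟩
    · exact ⟨_, ⟨i, g, rfl⟩, hξ, hη⟩
    · exact ⟨_, ⟨i, g, rfl⟩, hη, hξ⟩
  · rintro ⟨_, ⟨i, g, rfl⟩, hξ, hη⟩
    exact ⟨i, g, ξ, η, rfl, hξ, hη⟩

theorem dbAct_one (z : Sym2 (Boundary n)) : dbAct 1 z = z := by
  rw [dbAct, show bAct (1 : F n) = id from funext bAct_one, Sym2.map_id, id]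

theorem dbAct_mul (g h : F n) (z : Sym2 (Boundary n)) :
    dbAct (g * h) z = dbAct g (dbAct h z) := by
  rw [dbAct, dbAct, dbAct, Sym2.map_map, show bAct (g * h) = _ from funext (bAct_mul g h)]
  rfl

theorem dbAct_inv_dbAct (g : F n) (z : Sym2 (Boundary n)) : dbAct g⁻¹ (dbAct g z) = z := by
  rw [← dbAct_mul, inv_mul_cancel, dbAct_one]

theorem dbAct_mem_dblBndA (g : F n) {z : Sym2 (Boundary n)} (hz : z ∈ dblBndA A) :
    dbAct g z ∈ dblBndA A := by
  induction z with
  | h ξ η =>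
    obtain ⟨B, hB, hξ, hη⟩ := mk_mem_dblBndA_iff.1 hz
    exact mk_mem_dblBndA_iff.2
      ⟨_, hB.conjSub g, bAct_mem_limitSet g hξ, bAct_mem_limitSet g hη⟩

theorem dbAct_mem_relSet (g : F n) {z : Sym2 (Boundary n)} (hz : z ∈ relSet A) :
    dbAct g z ∈ relSet A := by
  refine ⟨fun hdiag => hz.1 ?_, fun hmem => hz.2 ?_⟩
  · rw [← dbAct_inv_dbAct g z]
    exact Sym2.IsDiag.map hdiag
  · rw [← dbAct_inv_dbAct g z]
    exact dbAct_mem_dblBndA g⁻¹ hmem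

theorem wordPrefixOf_iff {w : F n} {ξ : Boundary n} :
    wordPrefixOf w ξ ↔ rayVertex ξ (wlen w) = w := by
  rw [wordPrefixOf, ← rword_rayVertex]
  exact FreeGroup.toWord_inj

theorem wordPrefixOf.notMem_dblBndA {w : F n} (hw : w ∈ FmA A L) {ξ η : Boundary n}
    (h : wordPrefixOf w ξ) (hne : ξ.1 0 ≠ η.1 0) : s(ξ, η) ∉ dblBndA A := by
  intro hmem
  obtain ⟨B, hB, hξ, hη⟩ := mk_mem_dblBndA_iff.1 hmem
  refine rayVertex_notMem_FmA hB (fun m => (onGeodesic_rayVertex hne m).mem_treeVerts hξ hη)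
    (wlen w) (L := L) ?_
  rwa [wordPrefixOf_iff.1 h]

theorem cylinder_subset_relSet {w : F n} (hw : w ∈ FmA A L) : cylinder w ⊆ relSet A := by
  rintro _ ⟨ξ, η, rfl, hne, h⟩
  refine ⟨fun hdiag => hne (by rw [Sym2.mk_isDiag_iff.1 hdiag]), ?_⟩
  rcases h with h | h
  · exact h.notMem_dblBndA hw hne
  · rw [Sym2.eq_swap]
    exact h.notMem_dblBndA hw hne.symm

theorem OnGeodesic.bAct_bAct {g v : F n} {ξ η : Boundary n}
    (h : OnGeodesic v (bAct g ξ) (bAct g η)) : OnGeodesic (g⁻¹ * v) ξ η := by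
  rwa [OnGeodesic, mul_inv_rev, inv_inv, bAct_mul, bAct_mul]

theorem exists_inSystem_of_forall_onGeodesic (hdiam : DiamBound A L) {ξ η : Boundary n}
    (h : ∀ v, OnGeodesic v ξ η → rayVertex (bAct v⁻¹ ξ) (L + 2) ∉ Ccal A L) {v : F n}
    (hv : OnGeodesic v ξ η) :
    ∃ B, InSystem A B ∧ ∀ m, v * rayVertex (bAct v⁻¹ ξ) m ∈ treeVerts B := by
  obtain ⟨B, hB, hmem⟩ : ∃ B, InSystem A B ∧ ∀ m, rayVertex (bAct v⁻¹ ξ) m ∈ treeVerts B := by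
    refine exists_forall_rayVertex_mem_treeVerts hdiam fun k => ?_
    have := h _ (onGeodesic_rayVertex hv k).bAct_bAct
    rwa [inv_inv, mul_inv_rev, bAct_mul, bAct_inv_rayVertex_self] at this
  exact ⟨_, hB.conjSub v, fun m => mul_mem_treeVerts_conjSub v (hmem m)⟩

theorem mk_mem_dblBndA_of_forall_onGeodesic (hdiam : DiamBound A L) {ξ η : Boundary n}
    (hne : ξ.1 0 ≠ η.1 0)
    (h : ∀ v, OnGeodesic v ξ η → rayVertex (bAct v⁻¹ ξ) (L + 2) ∉ Ccal A L) :
    s(ξ, η) ∈ dblBndA A := by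
  have h1 : OnGeodesic 1 ξ η := by
    rwa [OnGeodesic, inv_one, bAct_one, bAct_one]
  obtain ⟨B, hB, hξ⟩ := exists_inSystem_of_forall_onGeodesic hdiam h h1
  simp only [inv_one, bAct_one, one_mul] at hξ
  refine mk_mem_dblBndA_iff.2 ⟨B, hB, mem_limitSet_of_forall_mem_treeVerts hξ,
    mem_limitSet_of_forall_mem_treeVerts fun k => ?_⟩
  obtain ⟨B', hB', hray⟩ := exists_inSystem_of_forall_onGeodesic hdiam h
    (onGeodesic_rayVertex hne.symm k).symm
  obtain ⟨c, -, hc⟩ := exists_mul_rayVertex_eq (rayVertex η k)⁻¹ ξ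
  have htail (m : ℕ) : rayVertex ξ (c + m) ∈ treeVerts B' := by
    have := hray (wlen (rayVertex η k)⁻¹ - c + m)
    rwa [← hc, mul_inv_cancel_left] at this
  obtain rfl : B = B' := hdiam.eq_of_rayVertex_mem hB hB' (ξ := ξ) (a := c) (b := c + (L + 1))
    (by omega) ⟨hξ _, htail 0⟩ ⟨hξ _, htail _⟩
  have := hray 0
  rwa [show rayVertex _ 0 = 1 from rfl, mul_one] at this

theorem exists_dbAct_mem_cylinder (hdiam : DiamBound A L) {z : Sym2 (Boundary n)}
    (hz : z ∈ relSet A) : ∃ x ∈ Ccal A L, ∃ g : F n, dbAct g z ∈ cylinder x := by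
  induction z with
  | h ξ η =>
    obtain ⟨v, hv⟩ := exists_onGeodesic (mt Sym2.mk_isDiag_iff.2 hz.1)
    have hnot := mt (mk_mem_dblBndA_of_forall_onGeodesic hdiam hv) (dbAct_mem_relSet v⁻¹ hz).2
    push Not at hnot
    obtain ⟨u, hu, hx⟩ := hnot
    refine ⟨_, hx, u⁻¹ * v⁻¹, ?_⟩
    rw [dbAct_mul]
    refine ⟨_, _, rfl, hu, Or.inl (wordPrefixOf_iff.2 ?_)⟩
    rw [wlen_rayVertex]

end RelativeDoubleBoundary

/-! ### Topology of the relative double boundary -/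

section UnorderedPairs

theorem preimage_image_sym2Mk {X : Type*} (U : Set (X × X)) :
    (fun p : X × X => s(p.1, p.2)) ⁻¹' ((fun p => s(p.1, p.2)) '' U) = U ∪ Prod.swap ⁻¹' U := by
  ext ⟨x, y⟩
  simp only [Set.mem_preimage, Set.mem_image, Set.mem_union, Prod.exists, Sym2.eq_iff,
    Prod.swap_prod_mk]
  constructor
  · rintro ⟨a, b, h, ⟨rfl, rfl⟩ | ⟨rfl, rfl⟩⟩
    · exact Or.inl h
    · exact Or.inr h
  · rintro (h | h)
    · exact ⟨x, y, h, Or.inl ⟨rfl, rfl⟩⟩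
    · exact ⟨y, x, h, Or.inr ⟨rfl, rfl⟩⟩

variable {X : Type*} [TopologicalSpace X]

theorem isOpenQuotientMap_sym2Mk : IsOpenQuotientMap fun p : X × X => s(p.1, p.2) := by
  have hq : Topology.IsQuotientMap fun p : X × X => s(p.1, p.2) := isQuotientMap_quot_mk
  refine ⟨hq.surjective, hq.continuous, fun U hU => ?_⟩
  rw [← hq.isOpen_preimage, preimage_image_sym2Mk]
  exact hU.union (hU.preimage continuous_swap)

instance [T2Space X] : T2Space (Sym2 X) := by
  rw [t2Space_iff_of_isOpenQuotientMap isOpenQuotientMap_sym2Mk]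
  have : {q : (X × X) × (X × X) | s(q.1.1, q.1.2) = s(q.2.1, q.2.2)} =
      {q | q.1 = q.2} ∪ {q | q.1 = q.2.swap} := by
    ext ⟨⟨a, b⟩, ⟨c, d⟩⟩
    simp
  rw [this]
  exact (isClosed_eq continuous_fst continuous_snd).union
    (isClosed_eq continuous_fst (continuous_swap.comp continuous_snd))

theorem continuous_sym2Map {Y : Type*} [TopologicalSpace Y] {f : X → Y} (hf : Continuous f) :
    Continuous (Sym2.map f) :=
  isOpenQuotientMap_sym2Mk.isQuotientMap.continuous_iff.2
    (isOpenQuotientMap_sym2Mk.continuous.comp (hf.prodMap hf))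

end UnorderedPairs

section Topology

variable {n r : ℕ} {A : Fin r → Subgroup (F n)} {L : ℕ}

instance : T2Space (Boundary n) :=
  inferInstanceAs (T2Space { ξ : ℕ → Letter n // IsRed ξ })

theorem isClosed_setOf_isRed : IsClosed { ξ : ℕ → Letter n | IsRed ξ } := by
  have : { ξ : ℕ → Letter n | IsRed ξ } = ⋂ i, { ξ | ξ (i + 1) ≠ linv (ξ i) } := by
    ext
    simp only [IsRed, Set.mem_ofPred_eq, Set.mem_iInter]
  rw [this]
  refine isClosed_iInter fun i => ?_
  have hc : Continuous fun ξ : ℕ → Letter n => (ξ (i + 1), ξ i) := by fun_prop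
  exact (isClosed_discrete { p : Letter n × Letter n | p.1 ≠ linv p.2 }).preimage hc

instance : CompactSpace (Boundary n) :=
  isCompact_iff_compactSpace.1 isClosed_setOf_isRed.isCompact

instance : BorelSpace (Sym2 (Boundary n)) := ⟨rfl⟩

theorem continuous_dbAct (g : F n) : Continuous (dbAct g) :=
  continuous_sym2Map (continuous_bAct g)

theorem cylinder_eq_image (w : F n) :
    cylinder w = (fun p : Boundary n × Boundary n => s(p.1, p.2)) ''
      { p | p.1.1 0 ≠ p.2.1 0 ∧ wordPrefixOf w p.1 } := by
  ext z
  constructor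
  · rintro ⟨ξ, η, rfl, hne, h | h⟩
    · exact ⟨(ξ, η), ⟨hne, h⟩, rfl⟩
    · exact ⟨(η, ξ), ⟨hne.symm, h⟩, Sym2.eq_swap⟩
  · rintro ⟨⟨ξ, η⟩, ⟨hne, h⟩, rfl⟩
    exact ⟨ξ, η, rfl, hne, Or.inl h⟩

theorem isClopen_setOf_ne_and_wordPrefixOf (w : F n) :
    IsClopen { p : Boundary n × Boundary n | p.1.1 0 ≠ p.2.1 0 ∧ wordPrefixOf w p.1 } := by
  have h0 : IsLocallyConstant fun p : Boundary n × Boundary n => (p.1.1 0, p.2.1 0) :=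
    ((isLocallyConstant_apply 0).comp_continuous continuous_fst).prodMk
      ((isLocallyConstant_apply 0).comp_continuous continuous_snd)
  have hw : IsLocallyConstant fun p : Boundary n × Boundary n => bpre p.1 (wlen w) :=
    (isLocallyConstant_bpre (wlen w)).comp_continuous continuous_fst
  have hne : IsClopen { p : Boundary n × Boundary n | p.1.1 0 ≠ p.2.1 0 } :=
    ⟨⟨h0 { q | q.1 ≠ q.2 }ᶜ⟩, h0 { q | q.1 ≠ q.2 }⟩
  exact hne.inter (hw.isClopen_fiber (rword w))

theorem isOpen_relCyl (w : F n) : IsOpen (relCyl A w) := by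
  refine IsOpen.preimage continuous_subtype_val ?_
  rw [cylinder_eq_image]
  exact isOpenQuotientMap_sym2Mk.isOpenMap _ (isClopen_setOf_ne_and_wordPrefixOf w).isOpen

theorem isCompact_relCyl {w : F n} (hw : w ∈ FmA A L) : IsCompact (relCyl A w) := by
  have hsub : cylinder w ⊆ Set.range (Subtype.val : ↥(relSet A) → Sym2 (Boundary n)) := by
    rw [Subtype.range_val]
    exact cylinder_subset_relSet hw
  rw [relCyl, Topology.IsInducing.subtypeVal.isCompact_preimage_iff hsub, cylinder_eq_image]
  exact (isClopen_setOf_ne_and_wordPrefixOf w).isClosed.isCompact.image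
    isOpenQuotientMap_sym2Mk.continuous

theorem relAct_val (g : F n) (z : ↥(relSet A)) : (relAct A g z).1 = dbAct g z.1 := by
  rw [relAct, dif_pos (dbAct_mem_relSet g z.2)]

theorem continuous_relAct (g : F n) : Continuous (relAct A g) := by
  rw [continuous_induced_rng, show Subtype.val ∘ relAct A g = _ from funext (relAct_val g)]
  exact (continuous_dbAct g).comp continuous_subtype_val

theorem relAct_inv_relAct (g : F n) (z : ↥(relSet A)) : relAct A g⁻¹ (relAct A g z) = z :=
  Subtype.ext (by rw [relAct_val, relAct_val, dbAct_inv_dbAct])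

variable (A) in
/-- The action of `g` on the relative double boundary, as a homeomorphism. -/
def relHomeo (g : F n) : ↥(relSet A) ≃ₜ ↥(relSet A) where
  toFun := relAct A g
  invFun := relAct A g⁻¹
  left_inv := relAct_inv_relAct g
  right_inv z := by simpa only [inv_inv] using relAct_inv_relAct g⁻¹ z
  continuous_toFun := continuous_relAct g
  continuous_invFun := continuous_relAct g⁻¹

theorem Ccal_subset_FmA : Ccal A L ⊆ FmA A L := fun x hx => ⟨x, hx, List.infix_rfl⟩

theorem finite_Ccal : (Ccal A L).Finite :=
  .of_finite_image ((List.finite_length_eq (Letter n) (L + 2)).subset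
    (Set.image_subset_iff.2 fun _ hx => hx.1)) FreeGroup.toWord_injective.injOn

variable (A L) in
/-- The union of the cylinders of the words of `𝒞`, a compact open set whose translates cover the
relative double boundary; currents are normalized by its mass. -/
def CcalCyl : Set ↥(relSet A) := ⋃ x ∈ Ccal A L, relCyl A x

theorem isOpen_CcalCyl : IsOpen (CcalCyl A L) :=
  isOpen_biUnion fun x _ => isOpen_relCyl x

theorem isCompact_CcalCyl : IsCompact (CcalCyl A L) :=
  finite_Ccal.isCompact_biUnion fun _ hx => isCompact_relCyl (Ccal_subset_FmA hx)

theorem exists_relHomeo_mem_CcalCyl (hdiam : DiamBound A L) (z : ↥(relSet A)) :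
    ∃ g, relHomeo A g z ∈ CcalCyl A L := by
  obtain ⟨x, hx, g, hg⟩ := exists_dbAct_mem_cylinder hdiam z.2
  refine ⟨g, Set.mem_biUnion hx ?_⟩
  rwa [← relAct_val] at hg

end Topology

/-! ### Vague limits of invariant measures -/

section VagueConvergence

open scoped CompactlySupported

variable {X κ : Type*} [TopologicalSpace X] [MeasurableSpace X] {ν : κ → Measure X} {l : Filter κ}
  {η : Measure X}

/-- Vague convergence of measures along a filter: the integrals of every compactly supported
continuous function converge. -/
def VaguelyTendsto (ν : κ → Measure X) (l : Filter κ) (η : Measure X) : Prop :=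
  ∀ f : C_c(X, ℝ), Filter.Tendsto (fun j => ∫ x, f x ∂ν j) l (nhds (∫ x, f x ∂η))

theorem exists_forall_norm_integral_le (f : C_c(X, ℝ)) :
    ∃ M : ℝ, ∀ (μ : Measure X) (C : NNReal), μ (tsupport f) ≤ C → ‖∫ x, f x ∂μ‖ ≤ M * C := by
  obtain ⟨M, hM⟩ := f.hasCompactSupport.exists_bound_of_continuous f.continuous
  refine ⟨max M 0, fun μ C hC => ?_⟩
  rw [← setIntegral_eq_integral_of_forall_compl_eq_zero fun x hx =>
    image_eq_zero_of_notMem_tsupport hx]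
  refine (norm_setIntegral_le_of_norm_le_const (hC.trans_lt ENNReal.coe_lt_top) fun x _ =>
    (hM x).trans (le_max_left M 0)).trans ?_
  exact mul_le_mul_of_nonneg_left (ENNReal.toReal_le_coe_of_le_coe hC) (le_max_right M 0)

theorem exists_tendsto_integral (U : Ultrafilter κ)
    (hν : ∀ K : Set X, IsCompact K → ∃ C : NNReal, ∀ j, ν j K ≤ C) (f : C_c(X, ℝ)) :
    ∃ a : ℝ, Filter.Tendsto (fun j => ∫ x, f x ∂ν j) U (nhds a) := by
  obtain ⟨C, hC⟩ := hν _ f.hasCompactSupport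
  obtain ⟨M, hM⟩ := exists_forall_norm_integral_le f
  obtain ⟨a, -, ha⟩ := (isCompact_closedBall (0 : ℝ) (M * C)).ultrafilter_le_nhds
    (U.map fun j => ∫ x, f x ∂ν j) <| Filter.le_principal_iff.2 <| Filter.mem_map.2 <|
      Filter.univ_mem' fun j => mem_closedBall_zero_iff.2 (hM (ν j) C (hC j))
  exact ⟨a, ha⟩

variable [T2Space X] [BorelSpace X]

theorem exists_regular_vaguelyTendsto [LocallyCompactSpace X] (U : Ultrafilter κ)
    (hν : ∀ K : Set X, IsCompact K → ∃ C : NNReal, ∀ j, ν j K ≤ C) :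
    ∃ η : Measure X, η.Regular ∧ VaguelyTendsto ν U η := by
  have hfin (j : κ) : IsFiniteMeasureOnCompacts (ν j) :=
    ⟨fun K hK => let ⟨_, hC⟩ := hν K hK; (hC j).trans_lt ENNReal.coe_lt_top⟩
  have hint (f : C_c(X, ℝ)) (j : κ) : Integrable f (ν j) :=
    f.continuous.integrable_of_hasCompactSupport f.hasCompactSupport
  choose Λ hΛ using exists_tendsto_integral U hν
  let Λlin : C_c(X, ℝ) →ₗ[ℝ] ℝ :=
    { toFun := Λ
      map_add' := fun f g => tendsto_nhds_unique (hΛ (f + g)) <|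
        ((hΛ f).add (hΛ g)).congr fun j => (integral_add (hint f j) (hint g j)).symm
      map_smul' := fun c f => tendsto_nhds_unique (hΛ (c • f)) <|
        ((hΛ f).const_mul c).congr fun j => (integral_const_mul c f).symm }
  let Λpos : C_c(X, ℝ) →ₚ[ℝ] ℝ := PositiveLinearMap.mk₀ Λlin fun f hf =>
    ge_of_tendsto' (hΛ f) fun j => integral_nonneg fun x => hf x
  refine ⟨RealRMK.rieszMeasure Λpos, inferInstance, fun f => ?_⟩
  rw [RealRMK.integral_rieszMeasure]
  exact hΛ f

theorem VaguelyTendsto.tendsto_measure [∀ j, IsFiniteMeasureOnCompacts (ν j)]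
    [IsFiniteMeasureOnCompacts η] (h : VaguelyTendsto ν l η) {K : Set X} (ho : IsOpen K)
    (hc : IsCompact K) : Filter.Tendsto (fun j => ν j K) l (nhds (η K)) := by
  let f : C_c(X, ℝ) :=
    { toFun := K.indicator 1
      continuous_toFun := IsClopen.continuous_indicator ⟨hc.isClosed, ho⟩ continuous_one
      hasCompactSupport' := .intro hc fun _ hx => Set.indicator_of_notMem hx _ }
  have hf (μ : Measure X) : ∫ x, f x ∂μ = μ.real K := integral_indicator_one ho.measurableSet
  have hreal := h f
  simp only [hf] at hreal
  exact (ENNReal.tendsto_toReal_iff (fun j => hc.measure_ne_top) hc.measure_ne_top).1 hreal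

theorem VaguelyTendsto.measurePreserving [LocallyCompactSpace X] [l.NeBot] [η.Regular]
    (h : VaguelyTendsto ν l η) (φ : X ≃ₜ X) (hφ : ∀ j, MeasurePreserving φ (ν j) (ν j)) :
    MeasurePreserving φ η η := by
  refine ⟨φ.continuous.measurable, ?_⟩
  have : (η.map φ).Regular := Measure.Regular.map φ
  refine Measure.ext_of_integral_eq_on_compactlySupported fun f => ?_
  have hmap (μ : Measure X) : ∫ x, f x ∂(μ.map φ) = ∫ x, f.comp φ.toCocompactMap x ∂μ :=
    integral_map_equiv φ.toMeasurableEquiv f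
  rw [hmap]
  refine tendsto_nhds_unique (h (f.comp φ.toCocompactMap)) ((h f).congr fun j => ?_)
  rw [← hmap, (hφ j).map_eq]

end VagueConvergence

section InvariantMeasures

variable {X ι : Type*} [TopologicalSpace X] {φ : ι → X ≃ₜ X} {V : Set X}

theorem locallyCompactSpace_of_forall_exists_mem [T2Space X] (hVo : IsOpen V) (hVc : IsCompact V)
    (hcov : ∀ x, ∃ i, φ i x ∈ V) : LocallyCompactSpace X := by
  have : WeaklyLocallyCompactSpace X := ⟨fun x => by
    obtain ⟨i, hi⟩ := hcov x
    exact ⟨φ i ⁻¹' V, (φ i).isCompact_preimage.2 hVc,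
      (hVo.preimage (φ i).continuous).mem_nhds hi⟩⟩
  infer_instance

variable [MeasurableSpace X] [BorelSpace X]

theorem exists_forall_measure_le_mul (hVo : IsOpen V) (hcov : ∀ x, ∃ i, φ i x ∈ V) {K : Set X}
    (hK : IsCompact K) :
    ∃ N : ℕ, ∀ μ : Measure X, (∀ i, MeasurePreserving (φ i) μ μ) → μ K ≤ N * μ V := by
  obtain ⟨t, ht⟩ := hK.elim_finite_subcover (fun i => φ i ⁻¹' V)
    (fun i => hVo.preimage (φ i).continuous) fun x _ => Set.mem_iUnion.2 (hcov x)
  refine ⟨t.card, fun μ hμ => ?_⟩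
  calc μ K ≤ μ (⋃ i ∈ t, φ i ⁻¹' V) := measure_mono ht
    _ ≤ ∑ i ∈ t, μ (φ i ⁻¹' V) := measure_biUnion_finset_le t _
    _ = ∑ _i ∈ t, μ V := Finset.sum_congr rfl fun i _ =>
      (hμ i).measure_preimage hVo.measurableSet.nullMeasurableSet
    _ = t.card * μ V := by rw [Finset.sum_const, nsmul_eq_mul]

theorem measure_ne_zero_of_isCompact (hVo : IsOpen V) (hcov : ∀ x, ∃ i, φ i x ∈ V)
    {μ : Measure X} (hμ : ∀ i, MeasurePreserving (φ i) μ μ) {K : Set X} (hK : IsCompact K)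
    (hμK : μ K ≠ 0) : μ V ≠ 0 := by
  obtain ⟨N, hN⟩ := exists_forall_measure_le_mul hVo hcov hK
  refine fun h0 => hμK (nonpos_iff_eq_zero.1 ?_)
  simpa only [h0, mul_zero] using hN μ hμ

variable [T2Space X] {κ : Type*} [Countable κ] {K : κ → Set X}

theorem exists_subseq_tendsto_of_measure_eq_one (hVo : IsOpen V) (hVc : IsCompact V)
    (hcov : ∀ x, ∃ i, φ i x ∈ V) (hKo : ∀ k, IsOpen (K k)) (hKc : ∀ k, IsCompact (K k))
    {ν : ℕ → Measure X} (hν : ∀ m i, MeasurePreserving (φ i) (ν m) (ν m))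
    (hνV : ∀ m, ν m V = 1) :
    ∃ (ms : ℕ → ℕ) (η : Measure X), StrictMono ms ∧ η.Regular ∧
      (∀ i, MeasurePreserving (φ i) η η) ∧ η V = 1 ∧
      ∀ k, Filter.Tendsto (fun j => ν (ms j) (K k)) Filter.atTop (nhds (η (K k))) := by
  have : LocallyCompactSpace X := locallyCompactSpace_of_forall_exists_mem hVo hVc hcov
  have hbdd (C : Set X) (hC : IsCompact C) : ∃ N : NNReal, ∀ m, ν m C ≤ N := by
    obtain ⟨N, hN⟩ := exists_forall_measure_le_mul hVo hcov hC
    exact ⟨N, fun m => by simpa only [hνV, mul_one, ENNReal.coe_natCast] using hN (ν m) (hν m)⟩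
  have hfin (m : ℕ) : IsFiniteMeasureOnCompacts (ν m) :=
    ⟨fun C hC => let ⟨_, hN⟩ := hbdd C hC; (hN m).trans_lt ENNReal.coe_lt_top⟩
  obtain ⟨a, ms, hms, ha⟩ := CompactSpace.tendsto_subseq fun m k => ν m (K k)
  rw [tendsto_pi_nhds] at ha
  obtain ⟨η, hη, hlim⟩ := exists_regular_vaguelyTendsto (ν := ν ∘ ms) (Filter.hyperfilter ℕ)
    fun C hC => let ⟨N, hN⟩ := hbdd C hC; ⟨N, fun j => hN (ms j)⟩
  have : ∀ j, IsFiniteMeasureOnCompacts ((ν ∘ ms) j) := fun j => hfin (ms j)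
  refine ⟨ms, η, hms, hη, fun i => hlim.measurePreserving (φ i) fun j => hν (ms j) i, ?_,
    fun k => ?_⟩
  · refine tendsto_nhds_unique (hlim.tendsto_measure hVo hVc) ?_
    simp only [Function.comp_apply, hνV, tendsto_const_nhds_iff]
  · have hk : a k = η (K k) := tendsto_nhds_unique ((ha k).mono_left Nat.hyperfilter_le_atTop)
      (hlim.tendsto_measure (hKo k) (hKc k))
    exact hk ▸ ha k

theorem exists_smul_subseq_tendsto (hVo : IsOpen V) (hVc : IsCompact V)
    (hcov : ∀ x, ∃ i, φ i x ∈ V) (hKo : ∀ k, IsOpen (K k)) (hKc : ∀ k, IsCompact (K k))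
    {μ : ℕ → Measure X} (hμ : ∀ m i, MeasurePreserving (φ i) (μ m) (μ m))
    (hμV : ∀ m, μ m V ≠ 0) (hμV' : ∀ m, μ m V ≠ ⊤) :
    ∃ (ms : ℕ → ℕ) (lam : ℕ → NNReal) (η : Measure X), StrictMono ms ∧ (∀ j, 0 < lam j) ∧
      η.Regular ∧ (∀ i, MeasurePreserving (φ i) η η) ∧ η V ≠ 0 ∧
      ∀ k, Filter.Tendsto (fun j => (lam j : ENNReal) * μ (ms j) (K k)) Filter.atTop
        (nhds (η (K k))) := by
  let lam (m : ℕ) : NNReal := (μ m V).toNNReal⁻¹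
  have hpos (m : ℕ) : 0 < (μ m V).toNNReal := ENNReal.toNNReal_pos (hμV m) (hμV' m)
  have hone (m : ℕ) : (lam m • μ m) V = 1 := by
    rw [Measure.smul_apply, ENNReal.smul_def, smul_eq_mul, ENNReal.coe_inv (hpos m).ne',
      ENNReal.coe_toNNReal (hμV' m), ENNReal.inv_mul_cancel (hμV m) (hμV' m)]
  obtain ⟨ms, η, hms, hreg, hinv, hηV, hlim⟩ := exists_subseq_tendsto_of_measure_eq_one hVo hVc
    hcov hKo hKc (fun m i => (hμ m i).smul_measure (lam m)) hone
  exact ⟨ms, lam ∘ ms, η, hms, fun j => inv_pos.2 (hpos (ms j)), hreg, hinv,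
    hηV ▸ one_ne_zero, hlim⟩

end InvariantMeasures

/-! ### Compactness of the space of projectivized relative currents -/

section Compactness

variable {n r : ℕ} {A : Fin r → Subgroup (F n)} {L : ℕ} {μ : Measure ↥(relSet A)}

theorem isRelCurrent_iff :
    IsRelCurrent A μ ↔ (∀ g, MeasurePreserving (relHomeo A g) μ μ) ∧ μ.Regular := by
  refine and_congr_left fun _ => forall_congr' fun g =>
    ⟨fun h => ⟨(relHomeo A g).continuous.measurable, Measure.ext fun s hs => ?_⟩,
      fun h s hs => h.measure_preimage hs.nullMeasurableSet⟩
  rw [Measure.map_apply (relHomeo A g).continuous.measurable hs]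
  exact h s hs

theorem exists_measure_relCyl_ne_zero (hμ : μ (CcalCyl A L) ≠ 0) :
    ∃ w ∈ FmA A L, μ (relCyl A w) ≠ 0 := by
  by_contra! h
  exact hμ ((measure_biUnion_null_iff finite_Ccal.countable).2 fun x hx =>
    h x (Ccal_subset_FmA hx))

end Compactness

theorem statement_10_general (n r L : ℕ) (A : Fin r → Subgroup (F n)) (hdiam : DiamBound A L)
    (ηs : ℕ → Measure ↥(relSet A)) (hcur : ∀ m, IsRelCurrent A (ηs m))
    (hnz : ∀ m, ∃ w ∈ FmA A L, ηs m (relCyl A w) ≠ 0) :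
    ∃ (ms : ℕ → ℕ) (lam : ℕ → NNReal) (η : Measure ↥(relSet A)),
      StrictMono ms ∧ (∀ j, 0 < lam j) ∧ IsRelCurrent A η ∧
      (∃ w ∈ FmA A L, η (relCyl A w) ≠ 0) ∧
      ∀ w ∈ FmA A L,
        Filter.Tendsto (fun j => (lam j : ENNReal) * ηs (ms j) (relCyl A w))
          Filter.atTop (nhds (η (relCyl A w))) := by
  have hcov := exists_relHomeo_mem_CcalCyl hdiam
  have hinv (m : ℕ) := (isRelCurrent_iff.1 (hcur m)).1
  have hreg (m : ℕ) : (ηs m).Regular := (hcur m).2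
  have hne (m : ℕ) : ηs m (CcalCyl A L) ≠ 0 :=
    let ⟨_, hw, hpos⟩ := hnz m
    measure_ne_zero_of_isCompact isOpen_CcalCyl hcov (hinv m) (isCompact_relCyl hw) hpos
  obtain ⟨ms, lam, η, hms, hlam, hη, hηinv, hηne, hlim⟩ :=
    exists_smul_subseq_tendsto (K := fun w : FmA A L => relCyl A w.1) isOpen_CcalCyl
      isCompact_CcalCyl hcov (fun w => isOpen_relCyl w.1) (fun w => isCompact_relCyl w.2) hinv hne
      fun m => isCompact_CcalCyl.measure_ne_top
  exact ⟨ms, lam, η, hms, hlam, isRelCurrent_iff.2 ⟨hηinv, hη⟩,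
    exists_measure_relCyl_ne_zero hηne, fun w hw => hlim ⟨w, hw⟩⟩

/-- Compactness of the space of projectivized relative currents. -/
theorem statement_10 (n r L : ℕ) (hn : 2 ≤ n) (A : Fin r → Subgroup (F n))
    (hsys : IsSystem A) (hmal : SystemMalnormal A) (hL : 1 ≤ L)
    (hdiam : DiamBound A L) (hbase : ∀ i, (1 : F n) ∈ treeVerts (A i))
    (ηs : ℕ → Measure ↥(relSet A))
    (hcur : ∀ m, IsRelCurrent A (ηs m))
    (hnz : ∀ m, ∃ w ∈ FmA A L, ηs m (relCyl A w) ≠ 0) :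
    ∃ (ms : ℕ → ℕ) (lam : ℕ → NNReal) (η : Measure ↥(relSet A)),
      StrictMono ms ∧ (∀ j, 0 < lam j) ∧ IsRelCurrent A η ∧
      (∃ w ∈ FmA A L, η (relCyl A w) ≠ 0) ∧
      ∀ w ∈ FmA A L,
        Filter.Tendsto (fun j => (lam j : ENNReal) * ηs (ms j) (relCyl A w))
          Filter.atTop (nhds (η (relCyl A w))) :=
  statement_10_general n r L A hdiam ηs hcur hnz

end RelCurr
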